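/- Let Z₁, Z₂ be real random variables with joint law ρ on ℝ × ℝ, let F₁ be the CDF of Z₁, and let F_ρ be the conditional CDF of ρ. Assume F₁ is continuous and that for almost every z₁ (with respect to the law of Z₁) the map z₂ ↦ F_ρ(z₁, z₂) is continuous. Then the pushforward of ρ under the map (z₁, z₂) ↦ (F₁(z₁), F_ρ(z₁, z₂)) is the uniform distribution on [0,1]²; in particular, F_{Z₁}(Z₁) and F_{Z₂|Z₁}(Z₂|Z₁) are independent random variables, each uniformly distributed on (0,1). -/

import Mathlib

/-!
The proof rests on the probability integral transform (`map_stieltjes_eq_uniform`): if `f` is a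
continuous CDF, then `f` pushes the measure with CDF `f` forward to the uniform law on `[0, 1]`,
because by the intermediate value theorem `{f ≤ t}` is squeezed between half-lines `(-∞, a]` and
`(-∞, b]` with `f a = t` and `f b` slightly larger than `t`.

The joint law disintegrates as `ρ = ρ.fst ⊗ₘ κ`, where `κ z` is the measure with CDF `condCDF ρ z`
(`fst_compProd_condCDFKernel`). The conditional transform sends `κ z` to the uniform law for almost
every `z`, and this image does not depend on `z`; so the probability of a rectangle `s ×ˢ t` under
the pushforward factors as `ρ.fst (F₁ ⁻¹' s)` times the uniform measure of `t`, and the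
transform applied to `F₁` identifies the first factor. Independence and the marginal laws are read
off from the product form of the joint law.
-/

open MeasureTheory ProbabilityTheory Set

/-- The probability integral transform for a continuous CDF. -/
lemma map_stieltjes_eq_uniform (f : StieltjesFunction ℝ) (hf : Continuous f)
    (h0 : Filter.Tendsto f Filter.atBot (nhds 0)) (h1 : Filter.Tendsto f Filter.atTop (nhds 1)) :
    Measure.map f f.measure = volume.restrict (Icc (0 : ℝ) 1) := by
  have hIic (x : ℝ) : f.measure (Iic x) = ENNReal.ofReal (f x) := by
    rw [f.measure_Iic h0 x, sub_zero]
  have huniv : f.measure univ = 1 := by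
    rw [f.measure_univ h0 h1]; simp
  have : IsProbabilityMeasure f.measure := ⟨huniv⟩
  have hnn (x : ℝ) : 0 ≤ f x := f.mono.le_of_tendsto h0 x
  have hle (x : ℝ) : f x ≤ 1 := f.mono.ge_of_tendsto h1 x
  have hivt (s : ℝ) (hs0 : 0 < s) (hs1 : s < 1) : ∃ a, f a = s := by
    obtain ⟨x, hx⟩ := (h0.eventually_lt_const hs0).exists
    obtain ⟨y, hy⟩ := (h1.eventually_const_lt hs1).exists
    exact mem_range_of_exists_le_of_exists_ge hf ⟨x, hx.le⟩ ⟨y, hy.le⟩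
  have : IsFiniteMeasure (Measure.map f f.measure) := inferInstance
  refine Measure.ext_of_Iic _ _ fun t => ?_
  rw [Measure.map_apply hf.measurable measurableSet_Iic, Measure.restrict_apply measurableSet_Iic]
  rcases lt_or_ge t 0 with ht0 | ht0
  · have e1 : f ⁻¹' Iic t = ∅ := by
      ext x; simpa using ht0.trans_le (hnn x)
    have e2 : Iic t ∩ Icc (0 : ℝ) 1 = ∅ := by
      ext x; simp only [mem_inter_iff, mem_Iic, mem_Icc, mem_empty_iff_false, iff_false]
      rintro ⟨h, h', -⟩; linarith
    rw [e1, e2]; simp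
  rcases le_or_gt 1 t with ht1 | ht1
  · have e1 : f ⁻¹' Iic t = univ := by
      ext x; simpa using (hle x).trans ht1
    have e2 : Iic t ∩ Icc (0 : ℝ) 1 = Icc 0 1 :=
      inter_eq_right.2 fun x hx => hx.2.trans ht1
    rw [e1, e2, huniv]; simp
  have e2 : Iic t ∩ Icc (0 : ℝ) 1 = Icc 0 t := by
    ext x; simp only [mem_inter_iff, mem_Iic, mem_Icc]
    constructor
    · rintro ⟨h, h', -⟩; exact ⟨h', h⟩
    · rintro ⟨h, h'⟩; exact ⟨h', h, by linarith⟩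
  rw [e2, Real.volume_Icc, sub_zero]
  apply le_antisymm
  · have hlim : Filter.Tendsto (fun s : ℝ => ENNReal.ofReal s) (nhdsWithin t (Ioi t))
        (nhds (ENNReal.ofReal t)) :=
      (ENNReal.continuous_ofReal.tendsto t).mono_left nhdsWithin_le_nhds
    refine ge_of_tendsto hlim ?_
    filter_upwards [Ioo_mem_nhdsGT ht1] with s hs
    obtain ⟨b, hb⟩ := hivt s (ht0.trans_lt hs.1) hs.2
    rw [← hb, ← hIic]
    refine measure_mono fun x hx => ?_
    by_contra hxb
    have h2 := f.mono (not_le.1 hxb).le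
    have h3 : f x ≤ t := hx
    linarith [hs.1]
  · rcases ht0.eq_or_lt with rfl | ht0
    · simp
    obtain ⟨a, ha⟩ := hivt t ht0 ht1
    rw [← ha, ← hIic]
    exact measure_mono fun x hx => f.mono hx

/-- The Markov kernel whose value at `z` is the measure with CDF `condCDF ρ z`. -/
noncomputable def condCDFKernel (ρ : Measure (ℝ × ℝ)) : Kernel ℝ ℝ :=
  ⟨fun z => (condCDF ρ z).measure, measurable_measure_condCDF ρ⟩

lemma condCDFKernel_apply (ρ : Measure (ℝ × ℝ)) (z : ℝ) :
    condCDFKernel ρ z = (condCDF ρ z).measure := rfl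

instance (ρ : Measure (ℝ × ℝ)) : IsMarkovKernel (condCDFKernel ρ) :=
  ⟨fun z => instIsProbabilityMeasureCondCDF ρ z⟩

lemma fst_compProd_condCDFKernel (ρ : Measure (ℝ × ℝ)) [IsFiniteMeasure ρ] :
    ρ.fst ⊗ₘ condCDFKernel ρ = ρ := by
  have h := congrArg (fun κ => κ ()) (compProd_toKernel (isCondKernelCDF_condCDF ρ))
  simp only [Kernel.const_apply] at h
  exact h

/-- Joint measurability holds because `condCDF ρ z x` is the mass of the section at `(z, x)` of a
measurable set under a kernel. -/
lemma measurable_condCDF_uncurry (ρ : Measure (ℝ × ℝ)) :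
    Measurable fun p : ℝ × ℝ => condCDF ρ p.1 p.2 := by
  have hs : MeasurableSet {q : (ℝ × ℝ) × ℝ | q.2 ≤ q.1.2} :=
    measurableSet_le measurable_snd (measurable_snd.comp measurable_fst)
  have h := (Kernel.measurable_kernel_prodMk_left
    (κ := (condCDFKernel ρ).comap Prod.fst measurable_fst) hs).ennreal_toReal
  convert h using 2 with p
  have : Prod.mk p ⁻¹' {q : (ℝ × ℝ) × ℝ | q.2 ≤ q.1.2} = Iic p.2 := rfl
  rw [this, Kernel.comap_apply, condCDFKernel_apply, measure_condCDF_Iic,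
    ENNReal.toReal_ofReal (condCDF_nonneg _ _ _)]

lemma map_rosenblatt (ρ : Measure (ℝ × ℝ)) [IsProbabilityMeasure ρ]
    (hF₁ : Continuous (cdf ρ.fst))
    (hcont : ∀ᵐ z₁ ∂ρ.fst, Continuous (condCDF ρ z₁)) :
    Measure.map (fun p : ℝ × ℝ => (cdf ρ.fst p.1, condCDF ρ p.1 p.2)) ρ
      = (volume.restrict (Icc (0 : ℝ) 1)).prod (volume.restrict (Icc (0 : ℝ) 1)) := by
  have hmeas : Measurable fun p : ℝ × ℝ => (cdf ρ.fst p.1, condCDF ρ p.1 p.2) :=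
    (hF₁.measurable.comp measurable_fst).prodMk (measurable_condCDF_uncurry ρ)
  have hfst : Measure.map (cdf ρ.fst) ρ.fst = volume.restrict (Icc (0 : ℝ) 1) := by
    have h := map_stieltjes_eq_uniform (cdf ρ.fst) hF₁ (tendsto_cdf_atBot _) (tendsto_cdf_atTop _)
    rwa [measure_cdf] at h
  symm
  refine Measure.prod_eq fun s t hs ht => ?_
  rw [Measure.map_apply hmeas (hs.prod ht)]
  conv_lhs => rw [← fst_compProd_condCDFKernel ρ]
  rw [Measure.compProd_apply]
  swap
  · rw [fst_compProd_condCDFKernel]; exact hmeas (hs.prod ht)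
  rw [fst_compProd_condCDFKernel]
  -- almost every fibre contributes the uniform mass of `t`, or nothing when `F₁ z ∉ s`
  have hae : ∀ᵐ z ∂ρ.fst,
      condCDFKernel ρ z
          (Prod.mk z ⁻¹' ((fun p : ℝ × ℝ => (cdf ρ.fst p.1, condCDF ρ p.1 p.2)) ⁻¹' (s ×ˢ t)))
        = (cdf ρ.fst ⁻¹' s).indicator (fun _ => volume.restrict (Icc (0 : ℝ) 1) t) z := by
    filter_upwards [hcont] with z hz
    by_cases hzs : cdf ρ.fst z ∈ s
    · rw [indicator_of_mem (by exact hzs), ← map_stieltjes_eq_uniform (condCDF ρ z) hz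
        (tendsto_condCDF_atBot ρ z) (tendsto_condCDF_atTop ρ z),
        Measure.map_apply hz.measurable ht, condCDFKernel_apply]
      congr 1
      ext x
      simp [hzs]
    · rw [indicator_of_notMem (by exact hzs)]
      convert measure_empty (μ := condCDFKernel ρ z)
      ext x
      simp [hzs]
  rw [lintegral_congr_ae hae, lintegral_indicator_const (hF₁.measurable hs),
    ← Measure.map_apply hF₁.measurable hs, hfst, mul_comm]

/-- The Rosenblatt transform (key step of Lemma 3.4, case `d = 2`): if `Z₁, Z₂` are real random
variables with joint law `ρ`, the CDF `F₁` of `Z₁` is continuous, and for a.e. `z₁` (w.r.t. the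
law of `Z₁`) the conditional CDF `z₂ ↦ condCDF ρ z₁ z₂` is continuous, then the pushforward of
`ρ` under `(z₁, z₂) ↦ (F₁ z₁, condCDF ρ z₁ z₂)` is the uniform distribution on `[0,1]²`; in
particular `F₁(Z₁)` and `condCDF ρ Z₁ Z₂` are independent, each uniform on `(0,1)`. -/
theorem stmt7 {Ω : Type*} [MeasurableSpace Ω] (P : Measure Ω) [IsProbabilityMeasure P]
    (Z₁ Z₂ : Ω → ℝ) (hZ₁ : Measurable Z₁) (hZ₂ : Measurable Z₂)
    (ρ : Measure (ℝ × ℝ)) (hρ : ρ = Measure.map (fun ω => (Z₁ ω, Z₂ ω)) P)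
    (hF₁ : Continuous (cdf ρ.fst))
    (hcont : ∀ᵐ z₁ ∂ρ.fst, Continuous (condCDF ρ z₁)) :
    Measure.map (fun p : ℝ × ℝ => (cdf ρ.fst p.1, condCDF ρ p.1 p.2)) ρ
        = (volume.restrict (Icc (0 : ℝ) 1)).prod (volume.restrict (Icc (0 : ℝ) 1)) ∧
      IndepFun (fun ω => cdf ρ.fst (Z₁ ω)) (fun ω => condCDF ρ (Z₁ ω) (Z₂ ω)) P ∧
      Measure.map (fun ω => cdf ρ.fst (Z₁ ω)) P = volume.restrict (Ioo (0 : ℝ) 1) ∧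
      Measure.map (fun ω => condCDF ρ (Z₁ ω) (Z₂ ω)) P = volume.restrict (Ioo (0 : ℝ) 1) := by
  have hZ : Measurable fun ω => (Z₁ ω, Z₂ ω) := hZ₁.prodMk hZ₂
  have hρp : IsProbabilityMeasure ρ := hρ ▸ Measure.isProbabilityMeasure_map hZ.aemeasurable
  have hmain := map_rosenblatt ρ hF₁ hcont
  have hG := measurable_condCDF_uncurry ρ
  have hmeas : Measurable fun p : ℝ × ℝ => (cdf ρ.fst p.1, condCDF ρ p.1 p.2) :=
    (hF₁.measurable.comp measurable_fst).prodMk hG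
  have hU : Measurable fun ω => cdf ρ.fst (Z₁ ω) := hF₁.measurable.comp hZ₁
  have hV : Measurable fun ω => condCDF ρ (Z₁ ω) (Z₂ ω) := hG.comp hZ
  have hUV : Measure.map (fun ω => (cdf ρ.fst (Z₁ ω), condCDF ρ (Z₁ ω) (Z₂ ω))) P
      = (volume.restrict (Icc (0 : ℝ) 1)).prod (volume.restrict (Icc (0 : ℝ) 1)) := by
    have h := Measure.map_map (μ := P) hmeas hZ
    rw [← hρ, hmain] at h
    exact h.symm
  have hprob : IsProbabilityMeasure (volume.restrict (Icc (0 : ℝ) 1)) := ⟨by simp⟩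
  have h1 : Measure.map (fun ω => cdf ρ.fst (Z₁ ω)) P = volume.restrict (Icc (0 : ℝ) 1) := by
    rw [← Measure.fst_map_prodMk hV, hUV, Measure.fst_prod]
  have h2 : Measure.map (fun ω => condCDF ρ (Z₁ ω) (Z₂ ω)) P
      = volume.restrict (Icc (0 : ℝ) 1) := by
    rw [← Measure.snd_map_prodMk hU, hUV, Measure.snd_prod]
  have hIoo : volume.restrict (Ioo (0 : ℝ) 1) = volume.restrict (Icc (0 : ℝ) 1) :=
    Measure.restrict_congr_set Ioo_ae_eq_Icc
  refine ⟨hmain, ?_, h1.trans hIoo.symm, h2.trans hIoo.symm⟩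
  rw [indepFun_iff_map_prod_eq_prod_map_map hU.aemeasurable hV.aemeasurable, hUV, h1, h2]
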